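/- Let a, b, c ∈ ℝ such that neither c nor 2−c is zero or a negative integer, and c ≠ 1. Let U be a connected open subset of the slit disk {λ ∈ ℂ : |λ| < 1, λ ∉ (−1,0]}. Then every analytic solution u of the hypergeometric differential equation with parameters (a,b,c) on U is a ℂ-linear combination of the restrictions to U of λ ↦ F(a,b;c;λ) and λ ↦ λ^{1−c} F(a+1−c, b+1−c; 2−c; λ). -/

import Mathlib

/-!
Both functions solve the equation on the slit disk, and their Wronskian has no zero there; two
solutions of a second-order linear equation with nonvanishing Wronskian span all solutions on a
connected domain, because the coefficients given by Cramer's rule are quotients of Wronskians, which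
solve the same first-order equation and hence have constant ratio
(`exists_linear_combination_of_wronskian_ne_zero`).

* The series `∑ Aₙ zⁿ` solves the equation on the unit disk because of the recursion
  `(n + 1)(n + c) Aₙ₊₁ = (n + a)(n + b) Aₙ`, which also gives convergence by the ratio test
  (`hypergeometric_series`).
* Write `f = F` and let `g` be the series of the second solution, so that `G = z^(1-c) g`. The
  Wronskian of `F` and `G` is `z^(-c) H`, where `H = f ((1-c) g + z g') - z f' g` is analytic on the
  whole disk, `H 0 = 1 - c ≠ 0` and `(1 - z) H' = (a + b + 1 - c) H`. Hence `H (1 - z)^(a+b+1-c)` is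
  constant and `H` never vanishes (`wronskian_factor_ne_zero`).
-/

/-- The power series with coefficients `A` converges absolutely on the open unit disk. -/
def UnitDiskSummable (A : ℕ → ℂ) : Prop :=
  ∀ r : ℝ, 0 < r → r < 1 → Summable fun n => ‖A n‖ * r ^ n

lemma UnitDiskSummable.summable {A : ℕ → ℂ} (hA : UnitDiskSummable A) {z : ℂ} (hz : ‖z‖ < 1) :
    Summable fun n => A n * z ^ n := by
  obtain ⟨r, hr, hr1⟩ := exists_between hz
  have hr0 : 0 < r := (norm_nonneg z).trans_lt hr
  refine Summable.of_norm_bounded (hA r hr0 hr1) fun n => ?_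
  rw [norm_mul, norm_pow]
  gcongr

/-- Coefficients of the derived series. -/
def derivCoeff (A : ℕ → ℂ) (n : ℕ) : ℂ := (n + 1) * A (n + 1)

lemma UnitDiskSummable.derivCoeff {A : ℕ → ℂ} (hA : UnitDiskSummable A) :
    UnitDiskSummable (derivCoeff A) := by
  intro r hr0 hr1
  obtain ⟨s, hs, hs1⟩ := exists_between hr1
  have hs0 : 0 < s := hr0.trans hs
  have hq : r / s < 1 := (div_lt_one hs0).2 hs
  have ht := tendsto_self_mul_const_pow_of_lt_one (by positivity : 0 ≤ r / s) hq
  have ht' := ht.comp (Filter.tendsto_add_atTop_nat 1)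
  -- the factor `(n + 1) (r / s) ^ (n + 1)` is eventually at most `1`
  have hev := ht'.eventually_le_const (zero_lt_one)
  have hsum : Summable fun n => ‖A (n + 1)‖ * s ^ (n + 1) * r⁻¹ :=
    ((summable_nat_add_iff 1).2 (hA s hs0 hs1)).mul_right _
  refine hsum.of_norm_bounded_eventually_nat ?_
  filter_upwards [hev] with n hn
  simp only [Function.comp_apply, Nat.cast_add, Nat.cast_one, div_pow] at hn
  have h1 : ((n : ℝ) + 1) * r ^ (n + 1) ≤ s ^ (n + 1) := by
    rwa [← mul_div_assoc, div_le_one (by positivity)] at hn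
  have hnn : ‖((n : ℂ) + 1)‖ = (n : ℝ) + 1 := by
    exact_mod_cast Complex.norm_natCast (n + 1)
  rw [Real.norm_of_nonneg (by positivity), _root_.derivCoeff, norm_mul, hnn]
  rw [le_mul_inv_iff₀ hr0]
  calc ((n : ℝ) + 1) * ‖A (n + 1)‖ * r ^ n * r
      = ‖A (n + 1)‖ * (((n : ℝ) + 1) * r ^ (n + 1)) := by ring
    _ ≤ _ := by gcongr

lemma UnitDiskSummable.hasDerivAt {A : ℕ → ℂ} (hA : UnitDiskSummable A) {z : ℂ} (hz : ‖z‖ < 1) :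
    HasDerivAt (fun w => ∑' n, A n * w ^ n) (∑' n, _root_.derivCoeff A n * z ^ n) z := by
  obtain ⟨r, hr, hr1⟩ := exists_between hz
  have hr0 : 0 < r := (norm_nonneg z).trans_lt hr
  have hzr : z ∈ Metric.ball (0 : ℂ) r := by simpa using hr
  have hbound : Summable fun n : ℕ => ‖A n * n‖ * r ^ (n - 1) := by
    refine (summable_nat_add_iff 1).1 ((hA.derivCoeff r hr0 hr1).congr fun n => ?_)
    simp [_root_.derivCoeff, mul_comm]
  have key : HasDerivAt (fun w => ∑' n, A n * w ^ n) (∑' n : ℕ, A n * (n * z ^ (n - 1))) z := by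
    refine hasDerivAt_tsum_of_isPreconnected (t := Metric.ball (0 : ℂ) r)
      (g' := fun n y => A n * (n * y ^ (n - 1))) hbound Metric.isOpen_ball
      (convex_ball _ _).isPreconnected (fun n y _ => (hasDerivAt_pow n y).const_mul (A n))
      (fun n y hy => ?_) hzr (hA.summable hz) hzr
    rw [← mul_assoc, norm_mul, norm_pow]
    have : ‖y‖ ≤ r := by simpa using (Metric.mem_ball.1 hy).le
    gcongr
  convert key using 1
  have hs : Summable fun n : ℕ => A n * (n * z ^ (n - 1)) := by
    refine Summable.of_norm_bounded hbound fun n => ?_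
    rw [← mul_assoc, norm_mul, norm_pow]
    gcongr
  rw [hs.tsum_eq_zero_add]
  simp [_root_.derivCoeff, mul_assoc, mul_left_comm]

/-- Multiplication of a power series by `z` shifts its coefficients. -/
lemma hasSum_shift {E E' : ℕ → ℂ} {z s : ℂ} (h : HasSum (fun n => E n * z ^ n) s)
    (h0 : E' 0 = 0) (hE : ∀ n, E' (n + 1) = E n) : HasSum (fun n => E' n * z ^ n) (z * s) := by
  rw [← hasSum_nat_add_iff' 1]
  simp only [Finset.range_one, Finset.sum_singleton, h0, zero_mul, sub_zero, hE]
  refine (h.mul_left z).congr_fun fun n => ?_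
  ring

/-- The coefficient recursion forces convergence on the unit disk, since the ratio of successive
coefficients tends to `1` (or the coefficients vanish from some point on). -/
lemma unitDiskSummable_of_recursion {a b c : ℝ} {A : ℕ → ℂ} (hc : ∀ k : ℕ, c ≠ -(k : ℝ))
    (hA : ∀ n : ℕ, ((n : ℂ) + 1) * (n + c) * A (n + 1) = (n + a) * (n + b) * A n) :
    UnitDiskSummable A := by
  intro r hr0 hr1
  obtain ⟨s, hs, hs1⟩ := exists_between hr1
  have hlim : ∀ x : ℝ, Filter.Tendsto (fun n : ℕ => x / (n : ℝ)) Filter.atTop (nhds 0) := fun x =>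
    tendsto_const_div_atTop_nhds_zero_nat x
  have hq : Filter.Tendsto (fun n : ℕ => (1 + a / n) * (1 + b / n) /
      ((1 + 1 / n) * (1 + c / (n : ℝ))) * r) Filter.atTop (nhds r) := by
    have := ((((hlim a).const_add 1).mul ((hlim b).const_add 1)).div
      (((hlim 1).const_add 1).mul ((hlim c).const_add 1)) (by norm_num)).mul_const r
    simpa using this
  have hq' := hq.norm
  rw [Real.norm_of_nonneg hr0.le] at hq'
  refine summable_of_ratio_norm_eventually_le hs1 ?_
  filter_upwards [hq'.eventually_le_const hs, Filter.eventually_gt_atTop 0] with n hn hn0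
  have hn0' : (n : ℝ) ≠ 0 := by positivity
  have hcn : (n : ℝ) + c ≠ 0 := fun h => hc n (by linarith)
  have hn1 : (n : ℝ) + 1 ≠ 0 := by positivity
  have hrat : A (n + 1) = (((n + a) * (n + b) / ((n + 1) * (n + c)) : ℝ) : ℂ) * A n := by
    have h1 : ((n : ℂ) + 1) ≠ 0 := by exact_mod_cast hn1
    have h2 : ((n : ℂ) + c) ≠ 0 := by exact_mod_cast hcn
    push_cast
    rw [div_mul_eq_mul_div, eq_div_iff (mul_ne_zero h1 h2), ← hA n]
    ring
  have he : (1 + a / n) * (1 + b / n) / ((1 + 1 / n) * (1 + c / (n : ℝ)))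
      = (n + a) * (n + b) / ((n + 1) * (n + c)) := by
    have h1 : 1 + c / (n : ℝ) ≠ 0 := by
      rw [one_add_div hn0']
      exact div_ne_zero hcn hn0'
    have h2 : 1 + 1 / (n : ℝ) ≠ 0 := by positivity
    field_simp
  rw [he, norm_mul, Real.norm_of_nonneg hr0.le] at hn
  rw [Real.norm_of_nonneg (by positivity : 0 ≤ ‖A (n + 1)‖ * r ^ (n + 1)),
    Real.norm_of_nonneg (by positivity : 0 ≤ ‖A n‖ * r ^ n), hrat, norm_mul, Complex.norm_real]
  calc ‖((n : ℝ) + a) * (n + b) / ((n + 1) * (n + c))‖ * ‖A n‖ * r ^ (n + 1)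
      = (‖((n : ℝ) + a) * (n + b) / ((n + 1) * (n + c))‖ * r) * (‖A n‖ * r ^ n) := by ring
    _ ≤ s * (‖A n‖ * r ^ n) := mul_le_mul_of_nonneg_right hn (by positivity)

/-- On the unit disk, the hypergeometric series is twice differentiable and solves the
hypergeometric differential equation. -/
lemma hypergeometric_series {a b c : ℝ} (hc : ∀ k : ℕ, c ≠ -(k : ℝ)) {f : ℂ → ℂ}
    (hf : ∀ z : ℂ, f z = ∑' n : ℕ,
      (((ascPochhammer ℝ n).eval a * (ascPochhammer ℝ n).eval b /
        ((ascPochhammer ℝ n).eval c * n.factorial) : ℝ) : ℂ) * z ^ n) :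
    f 0 = 1 ∧ ∃ f1 f2 : ℂ → ℂ, ∀ z : ℂ, ‖z‖ < 1 →
      HasDerivAt f (f1 z) z ∧ HasDerivAt f1 (f2 z) z ∧
      z * (z - 1) * f2 z + (((a : ℂ) + b + 1) * z - c) * f1 z + (a : ℂ) * b * f z = 0 := by
  obtain ⟨A, hAdef⟩ : ∃ A : ℕ → ℂ, A = fun n =>
      (((ascPochhammer ℝ n).eval a * (ascPochhammer ℝ n).eval b /
        ((ascPochhammer ℝ n).eval c * n.factorial) : ℝ) : ℂ) := ⟨_, rfl⟩
  have hf' : f = fun z => ∑' n, A n * z ^ n := by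
    ext z
    rw [hf, hAdef]
  have hpc : ∀ n : ℕ, (ascPochhammer ℝ n).eval c ≠ 0 := by
    intro n
    induction n with
    | zero => simp
    | succ n ih =>
      rw [ascPochhammer_succ_eval]
      exact mul_ne_zero ih fun h => hc n (by linarith)
  have hrec : ∀ n : ℕ, ((n : ℂ) + 1) * (n + c) * A (n + 1) = (n + a) * (n + b) * A n := by
    intro n
    have h1 := hpc n
    have h2 : c + (n : ℝ) ≠ 0 := fun h => hc n (by linarith)
    have h3 : (n.factorial : ℝ) ≠ 0 := by positivity
    have h4 : (n : ℝ) + 1 ≠ 0 := by positivity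
    have hreal : ((n : ℝ) + 1) * (n + c) * ((ascPochhammer ℝ (n + 1)).eval a *
        (ascPochhammer ℝ (n + 1)).eval b / ((ascPochhammer ℝ (n + 1)).eval c *
        (n + 1).factorial)) = (n + a) * (n + b) * ((ascPochhammer ℝ n).eval a *
        (ascPochhammer ℝ n).eval b / ((ascPochhammer ℝ n).eval c * n.factorial)) := by
      simp only [ascPochhammer_succ_eval, Nat.factorial_succ, Nat.cast_mul, Nat.cast_add,
        Nat.cast_one]
      field_simp
      ring
    simp only [hAdef]
    exact_mod_cast congrArg (fun x : ℝ => (x : ℂ)) hreal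
  have hA := unitDiskSummable_of_recursion hc hrec
  refine ⟨?_, fun z => ∑' n, derivCoeff A n * z ^ n,
    fun z => ∑' n, derivCoeff (derivCoeff A) n * z ^ n, fun z hz => ⟨?_, ?_, ?_⟩⟩
  · simp only [hf']
    rw [tsum_eq_single 0 (by intro n hn; simp [hn])]
    simp [hAdef]
  · rw [hf']
    exact hA.hasDerivAt hz
  · exact hA.derivCoeff.hasDerivAt hz
  · have s0 := (hA.summable hz).hasSum
    have s1 := (hA.derivCoeff.summable hz).hasSum
    have s2 := (hA.derivCoeff.derivCoeff.summable hz).hasSum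
    have s1z := hasSum_shift (E' := fun n => n * A n) s1 (by simp) (by simp [derivCoeff])
    have s2z := hasSum_shift (E' := fun n => n * derivCoeff A n) s2 (by simp)
      (by intro n; simp [derivCoeff])
    have s2zz := hasSum_shift (E' := fun n => (n - 1) * n * A n) s2z (by simp)
      (by intro n; simp [derivCoeff, mul_assoc])
    -- comparing coefficients of `z ^ n` leaves exactly the recursion
    have tot := ((((s2zz.sub s2z).add (s1z.mul_left ((a : ℂ) + b + 1))).sub
      (s1.mul_left (c : ℂ))).add (s0.mul_left ((a : ℂ) * b)))
    have hz0 := tot.unique (hasSum_zero.congr_fun fun n => by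
      simp only [derivCoeff]
      linear_combination (-z ^ n) * hrec n)
    rw [hf']
    linear_combination hz0

/-- Two solutions of `P y'' + Q y' + R y = 0` with nonvanishing Wronskian span the space of
solutions on a connected open set where `P` does not vanish. -/
lemma exists_linear_combination_of_wronskian_ne_zero {U : Set ℂ} (hU : IsOpen U)
    (hU' : IsPreconnected U) {P Q R f f1 f2 g g1 g2 u u1 u2 : ℂ → ℂ}
    (hP : ∀ z ∈ U, P z ≠ 0) (hW : ∀ z ∈ U, f z * g1 z - f1 z * g z ≠ 0)
    (hf : ∀ z ∈ U, HasDerivAt f (f1 z) z) (hf1 : ∀ z ∈ U, HasDerivAt f1 (f2 z) z)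
    (ef : ∀ z ∈ U, P z * f2 z + Q z * f1 z + R z * f z = 0)
    (hg : ∀ z ∈ U, HasDerivAt g (g1 z) z) (hg1 : ∀ z ∈ U, HasDerivAt g1 (g2 z) z)
    (eg : ∀ z ∈ U, P z * g2 z + Q z * g1 z + R z * g z = 0)
    (hu : ∀ z ∈ U, HasDerivAt u (u1 z) z) (hu1 : ∀ z ∈ U, HasDerivAt u1 (u2 z) z)
    (eu : ∀ z ∈ U, P z * u2 z + Q z * u1 z + R z * u z = 0) :
    ∃ α β : ℂ, ∀ z ∈ U, u z = α * f z + β * g z := by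
  have dα : ∀ z ∈ U,
      HasDerivAt (fun w => (u w * g1 w - u1 w * g w) / (f w * g1 w - f1 w * g w)) 0 z := by
    intro z hz
    refine ((((hu z hz).mul (hg1 z hz)).sub ((hu1 z hz).mul (hg z hz))).div
      (((hf z hz).mul (hg1 z hz)).sub ((hf1 z hz).mul (hg z hz))) (hW z hz)).congr_deriv ?_
    rw [div_eq_zero_iff]
    left
    refine (mul_eq_zero.1 ?_).resolve_left (hP z hz)
    simp only [Pi.mul_apply, Pi.sub_apply]
    linear_combination (f z * g1 z - f1 z * g z) * (u z * eg z hz - g z * eu z hz)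
      - (u z * g1 z - u1 z * g z) * (f z * eg z hz - g z * ef z hz)
  have dβ : ∀ z ∈ U,
      HasDerivAt (fun w => (f w * u1 w - f1 w * u w) / (f w * g1 w - f1 w * g w)) 0 z := by
    intro z hz
    refine ((((hf z hz).mul (hu1 z hz)).sub ((hf1 z hz).mul (hu z hz))).div
      (((hf z hz).mul (hg1 z hz)).sub ((hf1 z hz).mul (hg z hz))) (hW z hz)).congr_deriv ?_
    rw [div_eq_zero_iff]
    left
    refine (mul_eq_zero.1 ?_).resolve_left (hP z hz)
    simp only [Pi.mul_apply, Pi.sub_apply]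
    linear_combination (f z * g1 z - f1 z * g z) * (f z * eu z hz - u z * ef z hz)
      - (f z * u1 z - f1 z * u z) * (f z * eg z hz - g z * ef z hz)
  obtain ⟨α, hα⟩ := hU.exists_is_const_of_deriv_eq_zero hU'
    (fun z hz => (dα z hz).differentiableAt.differentiableWithinAt) (fun z hz => (dα z hz).deriv)
  obtain ⟨β, hβ⟩ := hU.exists_is_const_of_deriv_eq_zero hU'
    (fun z hz => (dβ z hz).differentiableAt.differentiableWithinAt) (fun z hz => (dβ z hz).deriv)
  refine ⟨α, β, fun z hz => ?_⟩
  have h := hW z hz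
  rw [← hα z hz, ← hβ z hz, div_mul_eq_mul_div, div_mul_eq_mul_div, ← add_div, eq_div_iff h]
  ring

/-- The Wronskian of `f` and `z ^ (1 - c) * g`, with its factor `z ^ (-c)` removed, has no zero in
the unit disk: it solves `(1 - z) H' = (a + b + 1 - c) H` and equals `1 - c` at the origin. -/
lemma wronskian_factor_ne_zero {a b c : ℂ} (hc1 : c ≠ 1) {f f1 f2 g g1 g2 : ℂ → ℂ}
    (hf0 : f 0 = 1) (hg0 : g 0 = 1)
    (hf : ∀ z : ℂ, ‖z‖ < 1 → HasDerivAt f (f1 z) z ∧ HasDerivAt f1 (f2 z) z ∧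
      z * (z - 1) * f2 z + ((a + b + 1) * z - c) * f1 z + a * b * f z = 0)
    (hg : ∀ z : ℂ, ‖z‖ < 1 → HasDerivAt g (g1 z) z ∧ HasDerivAt g1 (g2 z) z ∧
      z * (z - 1) * g2 z + (((a + 1 - c) + (b + 1 - c) + 1) * z - (2 - c)) * g1 z
        + (a + 1 - c) * (b + 1 - c) * g z = 0)
    {z : ℂ} (hz : ‖z‖ < 1) :
    f z * ((1 - c) * g z + z * g1 z) - f1 z * (z * g z) ≠ 0 := by
  have dK : ∀ w ∈ Metric.ball (0 : ℂ) 1, HasDerivAt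
      (fun w => (f w * ((1 - c) * g w + w * g1 w) - f1 w * (w * g w)) *
        Complex.exp ((a + b + 1 - c) * Complex.log (1 - w))) 0 w := by
    intro w hw
    have hw : ‖w‖ < 1 := by simpa using hw
    have hslit : 1 - w ∈ Complex.slitPlane := by
      left
      have := Complex.re_le_norm w
      simp only [Complex.sub_re, Complex.one_re]
      linarith
    have hne : 1 - w ≠ 0 := Complex.slitPlane_ne_zero hslit
    obtain ⟨df, df1, ef⟩ := hf w hw
    obtain ⟨dg, dg1, eg⟩ := hg w hw
    have dH := (df.mul ((dg.const_mul (1 - c)).add ((hasDerivAt_id w).mul dg1))).sub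
      (df1.mul ((hasDerivAt_id w).mul dg))
    have dE := ((((hasDerivAt_id w).const_sub 1).clog hslit).const_mul (a + b + 1 - c)).cexp
    refine (dH.mul dE).congr_deriv ?_
    simp only [Pi.mul_apply, Pi.sub_apply, Pi.add_apply, id]
    field_simp
    linear_combination Complex.exp ((a + b + 1 - c) * Complex.log (1 - w)) *
      (g w * ef - f w * eg)
  have hconst := Metric.isOpen_ball.is_const_of_deriv_eq_zero (convex_ball (0 : ℂ) 1).isPreconnected
    (fun w hw => (dK w hw).differentiableAt.differentiableWithinAt) (fun w hw => (dK w hw).deriv)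
    (show z ∈ Metric.ball (0 : ℂ) 1 by simpa using hz) (show (0 : ℂ) ∈ Metric.ball (0 : ℂ) 1 by simp)
  intro h0
  simp only [h0, hf0, hg0] at hconst
  simp only [zero_mul, mul_one, add_zero, mul_zero, sub_zero, Complex.log_one, Complex.exp_zero,
    one_mul] at hconst
  exact hc1 (by linear_combination hconst)

/-- For `c ≠ 1` with neither `c` nor `2−c` zero or a negative integer, every analytic
solution of the hypergeometric differential equation with parameters `(a,b,c)` on a
connected open subset `U` of the slit disk `{λ : |λ| < 1, λ ∉ (−1,0]}` is a `ℂ`-linear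
combination of `F(a,b;c;·)` and `λ^{1−c} F(a+1−c, b+1−c; 2−c; ·)` on `U`. -/
theorem stmt_10 (a b c : ℝ) (hc : ∀ k : ℕ, c ≠ -(k : ℝ)) (hc' : ∀ k : ℕ, 2 - c ≠ -(k : ℝ))
    (hc1 : c ≠ 1)
    (F G : ℂ → ℂ)
    (hF : ∀ z : ℂ, F z = ∑' n : ℕ,
      (((ascPochhammer ℝ n).eval a * (ascPochhammer ℝ n).eval b /
        ((ascPochhammer ℝ n).eval c * n.factorial) : ℝ) : ℂ) * z ^ n)
    (hG : ∀ z : ℂ, G z = z ^ ((1 : ℂ) - (c : ℂ)) * ∑' n : ℕ,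
      (((ascPochhammer ℝ n).eval (a + 1 - c) * (ascPochhammer ℝ n).eval (b + 1 - c) /
        ((ascPochhammer ℝ n).eval (2 - c) * n.factorial) : ℝ) : ℂ) * z ^ n)
    (U : Set ℂ) (hUopen : IsOpen U) (hUconn : IsConnected U)
    (hUsub : U ⊆ {z : ℂ | ‖z‖ < 1 ∧ ¬ (z.im = 0 ∧ -1 < z.re ∧ z.re ≤ 0)})
    (u : ℂ → ℂ) (hu : AnalyticOnNhd ℂ u U)
    (hsol : ∀ z ∈ U,
      z * (z - 1) * deriv (deriv u) z + (((a : ℂ) + b + 1) * z - c) * deriv u z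
        + (a : ℂ) * b * u z = 0) :
    ∃ α β : ℂ, ∀ z ∈ U, u z = α * F z + β * G z := by
  obtain ⟨g, hg⟩ : ∃ g : ℂ → ℂ, ∀ z : ℂ, g z = ∑' n : ℕ,
      (((ascPochhammer ℝ n).eval (a + 1 - c) * (ascPochhammer ℝ n).eval (b + 1 - c) /
        ((ascPochhammer ℝ n).eval (2 - c) * n.factorial) : ℝ) : ℂ) * z ^ n := ⟨_, fun _ => rfl⟩
  have hG' : G = fun z => z ^ ((1 : ℂ) - c) * g z := by
    ext z
    rw [hG, hg]
  obtain ⟨hF0, F1, F2, hFs⟩ := hypergeometric_series hc hF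
  obtain ⟨hg0, g1, g2, hgs⟩ := hypergeometric_series hc' hg
  push_cast at hgs
  have hmem : ∀ z ∈ U, ‖z‖ < 1 ∧ z ∈ Complex.slitPlane := by
    intro z hz
    obtain ⟨h1, h2⟩ := hUsub hz
    refine ⟨h1, ?_⟩
    rw [Complex.mem_slitPlane_iff]
    by_contra! h
    have := (abs_lt.1 ((Complex.abs_re_le_norm z).trans_lt h1)).1
    exact h2 ⟨h.2, this, h.1⟩
  have hcpow : ∀ z ∈ U, z ^ ((1 : ℂ) - c) = z * z ^ (-(c : ℂ)) := by
    intro z hz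
    rw [sub_eq_add_neg, Complex.cpow_add _ _ (Complex.slitPlane_ne_zero (hmem z hz).2),
      Complex.cpow_one]
  have hcpow' : ∀ z ∈ U, z ^ (-(c : ℂ) - 1) = z ^ (-(c : ℂ)) / z := by
    intro z hz
    rw [Complex.cpow_sub _ _ (Complex.slitPlane_ne_zero (hmem z hz).2), Complex.cpow_one]
  have hdU : ∀ z ∈ U, ∀ v : ℂ → ℂ, AnalyticOnNhd ℂ v U → HasDerivAt v (deriv v z) z :=
    fun z hz v hv => (hv z hz).differentiableAt.hasDerivAt
  refine exists_linear_combination_of_wronskian_ne_zero hUopen hUconn.isPreconnected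
    (P := fun z => z * (z - 1)) (Q := fun z => ((a : ℂ) + b + 1) * z - c)
    (R := fun _ => (a : ℂ) * b) (f1 := F1) (f2 := F2)
    (g1 := fun z => z ^ (-(c : ℂ)) * ((1 - c) * g z + z * g1 z))
    (g2 := fun z => z ^ (-(c : ℂ)) * ((2 - c) * g1 z + z * g2 z)
      - c * (z ^ (-(c : ℂ)) / z) * ((1 - c) * g z + z * g1 z))
    (fun z hz => ?_) (fun z hz => ?_)
    (fun z hz => (hFs z (hmem z hz).1).1) (fun z hz => (hFs z (hmem z hz).1).2.1)
    (fun z hz => (hFs z (hmem z hz).1).2.2) (fun z hz => ?_) (fun z hz => ?_) (fun z hz => ?_)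
    (fun z hz => hdU z hz u hu) (fun z hz => hdU z hz _ hu.deriv) hsol
  · refine mul_ne_zero (Complex.slitPlane_ne_zero (hmem z hz).2) fun h => ?_
    have h1 := (hmem z hz).1
    rw [sub_eq_zero.1 h] at h1
    simp at h1
  · have hH := wronskian_factor_ne_zero (by exact_mod_cast hc1) hF0 hg0 hFs hgs (hmem z hz).1
    have hp : z ^ (-(c : ℂ)) ≠ 0 := by
      simp [Complex.cpow_eq_zero_iff, Complex.slitPlane_ne_zero (hmem z hz).2]
    rw [hG']
    simp only [hcpow z hz]
    convert mul_ne_zero hp hH using 1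
    ring
  · rw [hG']
    have h := (((hasDerivAt_id z).cpow_const (c := (1 : ℂ) - c) (hmem z hz).2).mul
      (hgs z (hmem z hz).1).1)
    refine h.congr_deriv ?_
    simp only [id, hcpow z hz, show (1 : ℂ) - c - 1 = -c by ring]
    ring
  · have hz' := hgs z (hmem z hz).1
    have h := ((hasDerivAt_id z).cpow_const (c := -(c : ℂ)) (hmem z hz).2).mul
      ((hz'.1.const_mul (1 - (c : ℂ))).add ((hasDerivAt_id z).mul hz'.2.1))
    refine h.congr_deriv ?_
    simp only [id, hcpow' z hz, Pi.add_apply, Pi.mul_apply]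
    ring
  · have hz0 := Complex.slitPlane_ne_zero (hmem z hz).2
    have e := (hgs z (hmem z hz).1).2.2
    rw [hG']
    simp only [hcpow z hz]
    field_simp
    linear_combination z ^ (-(c : ℂ)) * z * e
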